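/- Let (X,d,H¹) be a metric graph equipped with the one-dimensional Hausdorff measure, satisfying BG(k,n) with constant C for some k ∈ ℝ, n ≥ 1, C ≥ 1. Then for every vertex x of X (interior local cut point), deg(x) ≤ C + 1. -/

import Mathlib

open Metric MeasureTheory Set Filter Topology
open scoped ENNReal NNReal

noncomputable def genSin (k t : ℝ) : ℝ :=
  if 0 < k then Real.sin (Real.sqrt k * t) / Real.sqrt k
  else if k = 0 then t
  else Real.sinh (Real.sqrt (-k) * t) / Real.sqrt (-k)

/-- `V_{k,n}(r₁,r₂)`, the volume of an annulus in the model space. -/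
noncomputable def Vkn (k n r₁ r₂ : ℝ) : ℝ :=
  (2 * Real.pi ^ (n / 2) / Real.Gamma (n / 2)) * ∫ t in r₁..r₂, genSin k t ^ (n - 1)

def IsLengthSpace (X : Type*) [MetricSpace X] : Prop :=
  ∀ x y : X, ∀ ε > 0, ∃ z : X, max (dist x z) (dist z y) ≤ dist x y / 2 + ε

variable {X : Type*} [MetricSpace X]

/-- The open annulus `A_{r₁,r₂}(x) = B_{r₂}(x) \ closure (B_{r₁}(x))`. -/
def ann (x : X) (r₁ r₂ : ℝ) : Set X := Metric.ball x r₂ \ closure (Metric.ball x r₁)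

/-- `S_{s₁,s₂}(x,U)`: points of the annulus `A_{s₁,s₂}(x)` lying on a minimal geodesic
from `x` to some point of `U`. -/
def geodSlice (x : X) (s₁ s₂ : ℝ) (U : Set X) : Set X :=
  {y | y ∈ ann x s₁ s₂ ∧ ∃ z ∈ U, dist x y + dist y z = dist x z}

/-- The generalized Bishop–Gromov inequality `BG(k,n)` with constant `C`. -/
def SatisfiesBG [MeasurableSpace X] (μ : Measure X) (k n C : ℝ) : Prop :=
  ∀ (x : X) (r₁ r₂ s₁ s₂ : ℝ), 0 ≤ s₁ → s₁ < s₂ → s₁ ≤ r₁ → r₁ < r₂ → s₂ ≤ r₂ →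
    ∀ U : Set X, MeasurableSet U → U ⊆ ann x r₁ r₂ →
      μ U * ENNReal.ofReal (Vkn k n s₁ s₂) ≤
        ENNReal.ofReal C * μ (geodSlice x s₁ s₂ U) * ENNReal.ofReal (Vkn k n r₁ r₂)

/-- A local cut point. -/
def IsLocalCutPoint (x : X) : Prop :=
  ∃ U : Set X, U ∈ 𝓝 x ∧ IsConnected U ∧ ¬ IsPreconnected (U \ {x})

/-- The degree of a point: supremum over connected neighborhoods `U` of `x` of the
number of connected components of `U \ {x}`. -/
noncomputable def degree (x : X) : ℕ∞ :=
  ⨆ U : {U : Set X // U ∈ 𝓝 x ∧ IsConnected U},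
    ENat.card (ConnectedComponents ↥(U.1 \ {x}))


/-- A (local description of a) metric graph: around every point `x` there is a radius
`ε` such that `B_ε(x) \ {x}` has finitely many connected components, on each of which
the distance to `x` is an isometry onto the interval `(0,ε)`. -/
def IsMetricGraph (X : Type*) [MetricSpace X] : Prop :=
  ∀ x : X, ∃ ε > 0,
    {S : Set X | ∃ y ∈ Metric.ball x ε \ {x},
        S = connectedComponentIn (Metric.ball x ε \ {x}) y}.Finite ∧
    ∀ y ∈ Metric.ball x ε \ {x},
      (∀ z ∈ connectedComponentIn (Metric.ball x ε \ {x}) y,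
        ∀ w ∈ connectedComponentIn (Metric.ball x ε \ {x}) y,
          dist z w = |dist x z - dist x w|) ∧
      ∀ t : ℝ, 0 < t → t < ε →
        ∃ z ∈ connectedComponentIn (Metric.ball x ε \ {x}) y, dist x z = t

/-!
Near `x` the graph is a star: finitely many arms, each isometric to `[0, ε)`. Let `x₁` be the point
at distance `l` from `x` on one arm, and let `U` be the union of the initial segments of length `δ`
of the other arms, so that `H¹(U) = (#arms - 1) δ`. In a length space every path that leaves an arm
close to `x` has to pass through `x`; hence minimal geodesics from `x₁` to `U` follow the first arm
down to `x`, the slice `S_{l-δ,l}(x₁,U)` lies in a segment of length `δ`, and `BG(k,n)` gives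
`(#arms - 1) V(l-δ,l) ≤ C V(l,l+δ)`. Both volumes are `δ` times the area of the model sphere of
radius `l`, up to `o(δ)`, so `#arms - 1 ≤ C`.

The degree is at most the number of arms: a connected subset `U` of the graph is locally connected,
so every component of `U \ {x}` accumulates at `x` and therefore contains an arm.
-/

section Topology

variable {Y : Type*} [TopologicalSpace Y]

theorem mem_connectedComponentIn_of_mem_closure {F : Set Y} {y z : Y} (hz : z ∈ F)
    (hzy : z ∈ closure (connectedComponentIn F y)) : z ∈ connectedComponentIn F y := by
  by_cases hy : y ∈ F
  · have hpre : IsPreconnected (insert z (connectedComponentIn F y)) :=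
      isPreconnected_connectedComponentIn.subset_closure (subset_insert _ _)
        (insert_subset hzy subset_closure)
    exact hpre.subset_connectedComponentIn (mem_insert_of_mem _ (mem_connectedComponentIn hy))
      (insert_subset hz (connectedComponentIn_subset F y)) (mem_insert _ _)
  · simp [connectedComponentIn_eq_empty hy] at hzy

theorem isOpen_connectedComponentIn_of_finite {F : Set Y} (hF : IsOpen F)
    (hfin : {S : Set Y | ∃ y ∈ F, S = connectedComponentIn F y}.Finite) (y : Y) :
    IsOpen (connectedComponentIn F y) := by
  set K := connectedComponentIn F y
  set others := {S : Set Y | ∃ z ∈ F, S = connectedComponentIn F z} \ {K}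
  have hK : K = F ∩ (⋃ S ∈ others, closure S)ᶜ := by
    apply Subset.antisymm
    · refine fun z hz => ⟨connectedComponentIn_subset F y hz, fun hzo => ?_⟩
      obtain ⟨S, ⟨⟨w, -, rfl⟩, hne⟩, hzS⟩ := mem_iUnion₂.1 hzo
      have hzw := mem_connectedComponentIn_of_mem_closure (connectedComponentIn_subset F y hz) hzS
      exact hne ((connectedComponentIn_eq hzw).trans (connectedComponentIn_eq hz).symm)
    · rintro z ⟨hzF, hzo⟩
      by_contra hzK
      refine hzo (mem_iUnion₂.2 ⟨_, ⟨⟨z, hzF, rfl⟩, fun h => hzK ?_⟩,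
        subset_closure (mem_connectedComponentIn hzF)⟩)
      exact (h : connectedComponentIn F z = K) ▸ mem_connectedComponentIn hzF
  rw [hK]
  exact hF.inter (hfin.sdiff.isClosed_biUnion fun _ _ => isClosed_closure).isOpen_compl

theorem mem_closure_connectedComponentIn_compl_singleton [T1Space Y] [PreconnectedSpace Y]
    [LocallyConnectedSpace Y] {x q : Y} (hq : q ≠ x) :
    x ∈ closure (connectedComponentIn {x}ᶜ q) := by
  set K := connectedComponentIn {x}ᶜ q
  by_contra hx
  have hclosed : IsClosed K := closure_subset_iff_isClosed.1 fun z hz =>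
    mem_connectedComponentIn_of_mem_closure (fun hzx => hx (hzx ▸ hz)) hz
  have hclopen : IsClopen K := ⟨hclosed, isOpen_compl_singleton.connectedComponentIn⟩
  have huniv := hclopen.eq_univ ⟨q, mem_connectedComponentIn hq⟩
  exact hx (subset_closure (huniv ▸ mem_univ x))

theorem mem_closure_connectedComponentIn_diff_singleton [T1Space Y] {U : Set Y}
    (hU : IsPreconnected U) [LocallyConnectedSpace U] {x q : Y} (hx : x ∈ U) (hq : q ∈ U \ {x}) :
    x ∈ closure (connectedComponentIn (U \ {x}) q) := by
  have := Subtype.preconnectedSpace hU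
  have hne : (⟨q, hq.1⟩ : U) ≠ ⟨x, hx⟩ := fun h => hq.2 (congrArg Subtype.val h)
  have himage : Subtype.val '' ({⟨x, hx⟩}ᶜ : Set U) ⊆ U \ {x} := by
    rintro _ ⟨z, hz, rfl⟩
    exact ⟨z.2, fun h => hz (Subtype.ext h)⟩
  have hcl := mem_closure_image continuous_subtype_val.continuousAt
    (mem_closure_connectedComponentIn_compl_singleton hne)
  have hsub : Subtype.val '' connectedComponentIn ({⟨x, hx⟩}ᶜ : Set U) ⟨q, hq.1⟩ ⊆
      connectedComponentIn (U \ {x}) q :=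
    (continuous_subtype_val.continuousOn.image_connectedComponentIn_subset hne).trans
      (connectedComponentIn_mono q himage)
  exact closure_mono hsub hcl

theorem enatCard_connectedComponents_le_of_forall_exists_mem {ι : Type*} {A : Set Y} {a : ι → Y}
    (ha : ∀ i, a i ∈ A) (hcover : ∀ q ∈ A, ∃ i, a i ∈ connectedComponentIn A q) :
    ENat.card (ConnectedComponents A) ≤ ENat.card ι := by
  let e : ι → ConnectedComponents A := fun i => ConnectedComponents.mk ⟨a i, ha i⟩
  have he : Function.Surjective e := fun c => by
    obtain ⟨q, rfl⟩ := ConnectedComponents.surjective_coe c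
    obtain ⟨i, hi⟩ := hcover q q.2
    rw [connectedComponentIn_eq_image q.2] at hi
    obtain ⟨p, hp, hpa⟩ := hi
    obtain rfl : p = ⟨a i, ha i⟩ := Subtype.ext hpa
    exact ⟨i, ConnectedComponents.coe_eq_coe'.2 hp⟩
  exact ENat.card_le_card_of_injective (Function.injective_surjInv he)

end Topology

theorem hausdorffMeasure_image_of_edist_eq {Y Z : Type*} [EMetricSpace Y] [MeasurableSpace Y]
    [BorelSpace Y] [EMetricSpace Z] [MeasurableSpace Z] [BorelSpace Z] {d : ℝ} (hd : 0 ≤ d)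
    {f : Y → Z} {s : Set Y} (hf : ∀ a ∈ s, ∀ b ∈ s, edist (f a) (f b) = edist a b) :
    (μH[d] : Measure Z) (f '' s) = μH[d] s := by
  have hrestrict : Isometry (s.domRestrict f) := fun a b => hf a a.2 b b.2
  have hval : Isometry (Subtype.val : s → Y) := isometry_subtype_coe
  rw [← range_domRestrict, ← image_univ, hrestrict.hausdorffMeasure_image (Or.inl hd),
    ← hval.hausdorffMeasure_image (Or.inl hd), image_univ, Subtype.range_coe]

section ModelSpace

variable {k n l : ℝ}

theorem continuous_genSin (k : ℝ) : Continuous (genSin k) := by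
  unfold genSin
  split_ifs <;> fun_prop

theorem eventually_genSin_pos (k : ℝ) : ∀ᶠ t in 𝓝[>] 0, 0 < genSin k t := by
  rcases lt_trichotomy k 0 with hk | rfl | hk
  · have hsqrt : 0 < √(-k) := Real.sqrt_pos.2 (neg_pos.2 hk)
    filter_upwards [self_mem_nhdsWithin] with t ht
    simp only [genSin, hk.not_gt, hk.ne, if_false]
    exact div_pos (Real.sinh_pos_iff.2 (mul_pos hsqrt ht)) hsqrt
  · filter_upwards [self_mem_nhdsWithin] with t ht
    simpa [genSin] using ht
  · have hsqrt : 0 < √k := Real.sqrt_pos.2 hk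
    filter_upwards [Ioo_mem_nhdsGT (div_pos Real.pi_pos hsqrt)] with t ht
    simp only [genSin, hk, if_true]
    exact div_pos (Real.sin_pos_of_pos_of_lt_pi (mul_pos hsqrt ht.1)
      ((lt_div_iff₀' hsqrt).1 ht.2)) hsqrt

/-- The area of the sphere of radius `r` in the model space: the density of `Vkn k n`. -/
noncomputable def sphereArea (k n r : ℝ) : ℝ :=
  (2 * Real.pi ^ (n / 2) / Real.Gamma (n / 2)) * genSin k r ^ (n - 1)

theorem sphereArea_pos (hn : 0 < n) (hl : 0 < genSin k l) : 0 < sphereArea k n l := by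
  have := Real.Gamma_pos_of_pos (half_pos hn)
  have := Real.pi_pos
  unfold sphereArea
  positivity

theorem hasDerivAt_Vkn (n : ℝ) (hl : 0 < genSin k l) :
    HasDerivAt (Vkn k n l) (sphereArea k n l) l := by
  have hmeas : Measurable fun t => genSin k t ^ (n - 1) :=
    (continuous_genSin k).measurable.pow_const _
  have hcont : ContinuousAt (fun t => genSin k t ^ (n - 1)) l :=
    (continuous_genSin k).continuousAt.rpow_const (Or.inl hl.ne')
  exact (intervalIntegral.integral_hasDerivAt_right IntervalIntegrable.refl
    hmeas.stronglyMeasurable.stronglyMeasurableAtFilter hcont).const_mul _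

theorem Vkn_self (k n l : ℝ) : Vkn k n l l = 0 := by simp [Vkn]

theorem Vkn_symm (k n a b : ℝ) : Vkn k n b a = -Vkn k n a b := by
  rw [Vkn, Vkn, intervalIntegral.integral_symm, mul_neg]

theorem tendsto_inv_mul_Vkn_right (n : ℝ) (hl : 0 < genSin k l) :
    Tendsto (fun δ => δ⁻¹ * Vkn k n l (l + δ)) (𝓝[>] 0) (𝓝 (sphereArea k n l)) := by
  simpa [Vkn_self] using (hasDerivAt_Vkn n hl).tendsto_slope_zero_right

theorem tendsto_inv_mul_Vkn_left (n : ℝ) (hl : 0 < genSin k l) :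
    Tendsto (fun δ => δ⁻¹ * Vkn k n (l - δ) l) (𝓝[>] 0) (𝓝 (sphereArea k n l)) := by
  have hneg : Tendsto (fun δ : ℝ => -δ) (𝓝[>] 0) (𝓝[<] 0) := by
    simpa using tendsto_neg_nhdsGT (a := (0 : ℝ))
  refine ((hasDerivAt_Vkn n hl).tendsto_slope_zero_left.comp hneg).congr fun δ => ?_
  simp [Vkn_self, Vkn_symm k n (l - δ) l, ← sub_eq_add_neg]

theorem le_of_eventually_mul_Vkn_le (hn : 0 < n) (hl : 0 < genSin k l) {a b : ℝ≥0∞}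
    (h : ∀ᶠ δ in 𝓝[>] 0, a * ENNReal.ofReal (Vkn k n (l - δ) l) ≤
      b * ENNReal.ofReal (Vkn k n l (l + δ))) : a ≤ b := by
  have hpos : ENNReal.ofReal (sphereArea k n l) ≠ 0 :=
    (ENNReal.ofReal_pos.2 (sphereArea_pos hn hl)).ne'
  have hleft := ENNReal.Tendsto.const_mul (a := a)
    (ENNReal.tendsto_ofReal (tendsto_inv_mul_Vkn_left n hl)) (Or.inl hpos)
  have hright := ENNReal.Tendsto.const_mul (a := b)
    (ENNReal.tendsto_ofReal (tendsto_inv_mul_Vkn_right n hl)) (Or.inl hpos)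
  have hlim : a * ENNReal.ofReal (sphereArea k n l) ≤ b * ENNReal.ofReal (sphereArea k n l) := by
    refine le_of_tendsto_of_tendsto hleft hright ?_
    filter_upwards [h, self_mem_nhdsWithin] with δ hδ hδpos
    have hinv : 0 ≤ δ⁻¹ := inv_nonneg.2 (le_of_lt hδpos)
    simp only [ENNReal.ofReal_mul hinv, mul_left_comm _ (ENNReal.ofReal δ⁻¹)]
    gcongr
  exact (ENNReal.mul_le_mul_iff_left hpos ENNReal.ofReal_ne_top).1 hlim

end ModelSpace

namespace IsLengthSpace

theorem exists_dist_le_div_two_pow (hlen : IsLengthSpace X) {A : Set X} {z w : X} (hz : z ∈ A)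
    (hw : w ∉ A) (m : ℕ) : ∀ η > 0, ∃ u ∈ A, ∃ v ∉ A, dist u v ≤ dist z w / 2 ^ m + η ∧
      dist z u + dist u v + dist v w ≤ dist z w + η := by
  induction m with
  | zero => exact fun η hη => ⟨z, hz, w, hw, by simp [hη.le], by simp [hη.le]⟩
  | succ m ih =>
    intro η hη
    obtain ⟨u, hu, v, hv, huv, hsum⟩ := ih (η / 4) (by positivity)
    obtain ⟨c, hc⟩ := hlen u v (η / 4) (by positivity)
    obtain ⟨huc, hcv⟩ := max_le_iff.1 hc
    have hhalf : dist z w / 2 ^ (m + 1) = dist z w / 2 ^ m / 2 := by rw [pow_succ, div_div]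
    by_cases hcA : c ∈ A
    · refine ⟨c, hcA, v, hv, by linarith, ?_⟩
      linarith [dist_triangle z u c]
    · refine ⟨u, hu, c, hcA, by linarith, ?_⟩
      linarith [dist_triangle c v w]

theorem exists_dist_lt (hlen : IsLengthSpace X) {A : Set X} {z w : X} (hz : z ∈ A)
    (hw : w ∉ A) {η : ℝ} (hη : 0 < η) : ∃ u ∈ A, ∃ v ∉ A, dist u v < η ∧
      dist z u + dist u v + dist v w ≤ dist z w + η := by
  have hlim : Tendsto (fun m : ℕ => dist z w / 2 ^ m) atTop (𝓝 0) :=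
    tendsto_const_nhds.div_atTop (tendsto_pow_atTop_atTop_of_one_lt one_lt_two)
  obtain ⟨m, hm⟩ := (hlim.eventually_lt_const (half_pos hη)).exists
  obtain ⟨u, hu, v, hv, huv, hsum⟩ :=
    hlen.exists_dist_le_div_two_pow hz hw m (η / 2) (half_pos hη)
  exact ⟨u, hu, v, hv, by linarith, by linarith⟩

end IsLengthSpace

/-- `f` restricts to an isometric embedding of `[0, ε)` starting at `x`, and the arm
`f '' Ioo 0 ε` is open in `X`. The values of `f` outside `[0, ε)` are irrelevant. -/
structure IsArm (x : X) (ε : ℝ) (f : ℝ → X) : Prop where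
  apply_zero : f 0 = x
  dist_eq : ∀ s ∈ Ico 0 ε, ∀ t ∈ Ico 0 ε, dist (f s) (f t) = dist s t
  isOpen_image : IsOpen (f '' Ioo 0 ε)

theorem exists_isArm {x : X} {ε : ℝ} {S : Set X} (hS : IsOpen S)
    (hmaps : ∀ y ∈ S, dist x y ∈ Ioo 0 ε) (hsurj : ∀ t ∈ Ioo 0 ε, ∃ y ∈ S, dist x y = t)
    (hdist : ∀ y ∈ S, ∀ z ∈ S, dist y z = |dist x y - dist x z|) :
    ∃ f, IsArm x ε f ∧ f '' Ioo 0 ε = S := by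
  have : Nonempty X := ⟨x⟩
  choose! g hgS hgdist using hsurj
  have hupdate : ∀ t ∈ Ioo 0 ε, Function.update g 0 x t = g t := fun t ht =>
    Function.update_of_ne ht.1.ne' x g
  have himage : Function.update g 0 x '' Ioo 0 ε = S := by
    rw [image_congr hupdate]
    refine Subset.antisymm (image_subset_iff.2 hgS) fun y hy => ⟨dist x y, hmaps y hy, ?_⟩
    rw [← dist_eq_zero, hdist _ (hgS _ (hmaps y hy)) y hy, hgdist _ (hmaps y hy), sub_self,
      abs_zero]
  refine ⟨Function.update g 0 x, ⟨Function.update_self 0 x g, ?_, himage ▸ hS⟩, himage⟩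
  rintro s ⟨hs, hsε⟩ t ⟨ht, htε⟩
  rcases hs.eq_or_lt with rfl | hs <;> rcases ht.eq_or_lt with rfl | ht
  · simp
  · rw [Function.update_self, hupdate t ⟨ht, htε⟩, hgdist t ⟨ht, htε⟩, dist_zero_left,
      Real.norm_of_nonneg ht.le]
  · rw [Function.update_self, hupdate s ⟨hs, hsε⟩, dist_comm, hgdist s ⟨hs, hsε⟩, dist_zero_right,
      Real.norm_of_nonneg hs.le]
  · rw [hupdate s ⟨hs, hsε⟩, hupdate t ⟨ht, htε⟩, hdist _ (hgS s ⟨hs, hsε⟩) _ (hgS t ⟨ht, htε⟩),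
      hgdist s ⟨hs, hsε⟩, hgdist t ⟨ht, htε⟩, Real.dist_eq]

namespace IsArm

variable {x : X} {ε : ℝ} {f : ℝ → X}

theorem dist_apply (h : IsArm x ε f) {t : ℝ} (ht : t ∈ Ico 0 ε) : dist x (f t) = t := by
  rw [← h.apply_zero, h.dist_eq 0 ⟨le_rfl, ht.1.trans_lt ht.2⟩ t ht, dist_zero_left,
    Real.norm_of_nonneg ht.1]

theorem continuousOn (h : IsArm x ε f) : ContinuousOn f (Ico 0 ε) :=
  (LipschitzOnWith.of_dist_le_mul (K := 1) fun s hs t ht => by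
    simp [h.dist_eq s hs t ht]).continuousOn

theorem image_Ioo_eq (h : IsArm x ε f) {a b : ℝ} (ha : 0 ≤ a) (hb : b ≤ ε) :
    f '' Ioo a b = f '' Ioo 0 ε ∩ dist x ⁻¹' Ioo a b := by
  have hdist : ∀ t ∈ Ioo 0 ε, dist x (f t) = t := fun t ht => h.dist_apply ⟨ht.1.le, ht.2⟩
  apply Subset.antisymm
  · rintro _ ⟨t, ht, rfl⟩
    have ht' := Ioo_subset_Ioo ha hb ht
    exact ⟨mem_image_of_mem f ht', by rwa [mem_preimage, hdist t ht']⟩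
  · rintro _ ⟨⟨t, ht, rfl⟩, htab⟩
    rw [mem_preimage, hdist t ht] at htab
    exact mem_image_of_mem f htab

theorem isOpen_image_Ioo (h : IsArm x ε f) {a b : ℝ} (ha : 0 ≤ a) (hb : b ≤ ε) :
    IsOpen (f '' Ioo a b) := by
  rw [h.image_Ioo_eq ha hb]
  exact h.isOpen_image.inter (isOpen_Ioo.preimage (by fun_prop))

theorem isCompact_image_Icc (h : IsArm x ε f) {a b : ℝ} (ha : 0 ≤ a) (hb : b < ε) :
    IsCompact (f '' Icc a b) :=
  isCompact_Icc.image_of_continuousOn (h.continuousOn.mono fun _ hs =>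
    ⟨ha.trans hs.1, hs.2.trans_lt hb⟩)

theorem mono (h : IsArm x ε f) {δ : ℝ} (hδ : δ ≤ ε) : IsArm x δ f where
  apply_zero := h.apply_zero
  dist_eq s hs t ht := h.dist_eq s (Ico_subset_Ico_right hδ hs) t (Ico_subset_Ico_right hδ ht)
  isOpen_image := h.isOpen_image_Ioo le_rfl hδ

theorem hausdorffMeasure_image [MeasurableSpace X] [BorelSpace X] (h : IsArm x ε f) {s : Set ℝ}
    (hs : s ⊆ Ico 0 ε) : (μH[1] : Measure X) (f '' s) = volume s := by
  rw [hausdorffMeasure_image_of_edist_eq zero_le_one, hausdorffMeasure_real]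
  intro a ha b hb
  rw [edist_dist, edist_dist, h.dist_eq a (hs ha) b (hs hb)]

/-- The open segment between two points of the arm missed by `U` has both its endpoints off `U`,
so a preconnected `U` that meets it is contained in it. -/
theorem apply_notMem_of_mem_Ioo (h : IsArm x ε f) {U : Set X} (hU : IsPreconnected U)
    (hx : x ∈ U) {a b t : ℝ} (ha : 0 < a) (hb : b < ε) (hfa : f a ∉ U) (hfb : f b ∉ U)
    (ht : t ∈ Ioo a b) : f t ∉ U := by
  intro hft
  have hclosure : closure (f '' Ioo a b) ∩ U ⊆ f '' Ioo a b := by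
    rintro y ⟨hy, hyU⟩
    obtain ⟨s, hs, rfl⟩ := closure_minimal (image_mono Ioo_subset_Icc_self)
      (h.isCompact_image_Icc ha.le hb).isClosed hy
    exact mem_image_of_mem f ⟨hs.1.lt_of_ne fun has => hfa (has ▸ hyU),
      hs.2.lt_of_ne fun hsb => hfb (hsb ▸ hyU)⟩
  obtain ⟨s, hs, hsx⟩ := hU.subset_of_closure_inter_subset (h.isOpen_image_Ioo ha.le hb.le)
    ⟨f t, hft, mem_image_of_mem f ht⟩ hclosure hx
  have hdist := h.dist_apply ⟨(ha.trans hs.1).le, hs.2.trans hb⟩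
  rw [hsx, dist_self] at hdist
  exact (ha.trans hs.1).ne hdist

theorem eventually_image_Ioo_subset_or_disjoint (h : IsArm x ε f) {U : Set X}
    (hU : IsPreconnected U) (hx : x ∈ U) (hε : 0 < ε) :
    ∀ᶠ δ in 𝓝[>] 0, f '' Ioo 0 δ ⊆ U ∨ Disjoint (f '' Ioo 0 δ) U := by
  by_cases hsub : ∃ c > 0, f '' Ioo 0 c ⊆ U
  · obtain ⟨c, hc, hcU⟩ := hsub
    filter_upwards [Ioo_mem_nhdsGT hc] with δ hδ
    exact Or.inl ((image_mono (Ioo_subset_Ioo_right hδ.2.le)).trans hcU)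
  · have hexit : ∀ c > 0, ∃ a ∈ Ioo 0 c, f a ∉ U := fun c hc => by
      by_contra! hcon
      exact hsub ⟨c, hc, image_subset_iff.2 hcon⟩
    obtain ⟨b, hb, hbU⟩ := hexit ε hε
    filter_upwards [Ioo_mem_nhdsGT hb.1] with δ hδ
    refine Or.inr (disjoint_left.2 ?_)
    rintro _ ⟨t, ht, rfl⟩
    obtain ⟨a, ha, haU⟩ := hexit t ht.1
    exact h.apply_notMem_of_mem_Ioo hU hx ha.1 hb.2 haU hbU ⟨ha.2, ht.2.trans hδ.2⟩

/-- A short almost geodesic from a point of the arm to a point outside stays away from the far end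
of the arm, and compact subsegments of the arm have a neighbourhood inside it: so the almost
geodesic leaves the arm near `x`. -/
theorem dist_add_dist_le (h : IsArm x ε f) (hlen : IsLengthSpace X) {z w : X}
    (hz : z ∈ f '' Ioo 0 ε) (hw : w ∉ f '' Ioo 0 ε) (hε : dist x z + dist z w < ε) :
    dist x z + dist x w ≤ dist z w := by
  refine le_of_forall_pos_le_add fun a ha => ?_
  obtain ⟨r, hr, hrε⟩ := exists_between hε
  have ha3 : 0 < a / 3 := by positivity
  obtain ⟨η, hη, hthick⟩ := (h.isCompact_image_Icc ha3.le hrε).exists_thickening_subset_open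
    h.isOpen_image (image_mono fun s hs => ⟨ha3.trans_le hs.1, hs.2.trans_lt hrε⟩)
  obtain ⟨u, ⟨s, hs, rfl⟩, v, hv, huv, hsum⟩ := hlen.exists_dist_lt hz hw
    (lt_min hη (lt_min ha3 (sub_pos.2 hr)))
  obtain ⟨huvη, -⟩ := lt_min_iff.1 huv
  have hmin_a : min η (min (a / 3) (r - (dist x z + dist z w))) ≤ a / 3 :=
    (min_le_right _ _).trans (min_le_left _ _)
  have hmin_r : min η (min (a / 3) (r - (dist x z + dist z w))) ≤ r - (dist x z + dist z w) :=
    (min_le_right _ _).trans (min_le_right _ _)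
  have hdist : dist x (f s) = s := h.dist_apply ⟨hs.1.le, hs.2⟩
  have hsa : s < a / 3 := by
    by_contra! has
    have hsr : s ≤ r := by
      linarith [dist_triangle x z (f s), dist_nonneg (x := f s) (y := v),
        dist_nonneg (x := v) (y := w)]
    exact hv (hthick (mem_thickening_iff.2
      ⟨f s, mem_image_of_mem f ⟨has, hsr⟩, by rwa [dist_comm]⟩))
  linarith [dist_triangle x (f s) z, dist_triangle x (f s) w, dist_triangle (f s) v w,
    dist_comm z (f s)]

end IsArm

/-- The punctured ball `B_ε(x) \ {x}` is the disjoint union of the arms `γ i`. -/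
structure IsStar {ι : Type*} (x : X) (ε : ℝ) (γ : ι → ℝ → X) : Prop where
  pos : 0 < ε
  isArm : ∀ i, IsArm x ε (γ i)
  disjoint : Pairwise (Function.onFun Disjoint fun i => γ i '' Ioo 0 ε)
  iUnion_image : ⋃ i, γ i '' Ioo 0 ε = ball x ε \ {x}

/-- The components of the punctured ball `B_ε(x) \ {x}`; they index the arms of the star around a
point of a metric graph. -/
def branches (x : X) (ε : ℝ) : Set (Set X) :=
  {S | ∃ y ∈ ball x ε \ {x}, S = connectedComponentIn (ball x ε \ {x}) y}

theorem pairwiseDisjoint_branches (x : X) (ε : ℝ) : (branches x ε).PairwiseDisjoint id := by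
  rintro _ ⟨y, -, rfl⟩ _ ⟨y', -, rfl⟩ hne
  refine disjoint_left.2 fun z hz hz' => hne ?_
  exact (connectedComponentIn_eq hz).trans (connectedComponentIn_eq hz').symm

theorem sUnion_branches (x : X) (ε : ℝ) : ⋃₀ branches x ε = ball x ε \ {x} := by
  apply Subset.antisymm
  · rintro z ⟨_, ⟨y, -, rfl⟩, hz⟩
    exact connectedComponentIn_subset _ _ hz
  · exact fun z hz => ⟨_, ⟨z, hz, rfl⟩, mem_connectedComponentIn hz⟩

theorem IsMetricGraph.exists_isStar (hgraph : IsMetricGraph X) (x : X) :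
    ∃ ε, (branches x ε).Finite ∧ ∃ γ : branches x ε → ℝ → X, IsStar x ε γ := by
  obtain ⟨ε, hε, hfin, hbranch⟩ := hgraph x
  have harm : ∀ S : branches x ε, ∃ f, IsArm x ε f ∧ f '' Ioo 0 ε = S.1 := by
    rintro ⟨_, y, hy, rfl⟩
    obtain ⟨hdist, hsurj⟩ := hbranch y hy
    refine exists_isArm (isOpen_connectedComponentIn_of_finite
      (isOpen_ball.sdiff isClosed_singleton) hfin y) (fun z hz => ?_)
      (fun t ht => hsurj t ht.1 ht.2) hdist
    obtain ⟨hzε, hzx⟩ := connectedComponentIn_subset _ _ hz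
    exact ⟨dist_pos.2 (Ne.symm hzx), mem_ball'.1 hzε⟩
  choose γ hγ himage using harm
  refine ⟨ε, hfin, γ, hε, hγ, fun S S' hne => ?_, ?_⟩
  · simp only [Function.onFun, himage]
    exact pairwiseDisjoint_branches x ε S.2 S'.2 (Subtype.coe_ne_coe.2 hne)
  · simp only [himage]
    rw [← sUnion_eq_iUnion, sUnion_branches]

/-- The segments of length `δ` at the center of all arms but `γ i`: the set `B_δ(x) \ γ i` to which
the Bishop–Gromov inequality is applied. -/
def otherArms {ι : Type*} (γ : ι → ℝ → X) (i : ι) (δ : ℝ) : Set X :=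
  ⋃ j ∈ ({i}ᶜ : Set ι), γ j '' Ioo 0 δ

namespace IsStar

variable {ι : Type*} {x : X} {ε δ : ℝ} {γ : ι → ℝ → X}

theorem mono (h : IsStar x ε γ) (hδ : 0 < δ) (hδε : δ ≤ ε) : IsStar x δ γ where
  pos := hδ
  isArm i := (h.isArm i).mono hδε
  disjoint i j hij := (h.disjoint hij).mono (image_mono (Ioo_subset_Ioo_right hδε))
    (image_mono (Ioo_subset_Ioo_right hδε))
  iUnion_image := by
    simp only [(h.isArm _).image_Ioo_eq le_rfl hδε, ← iUnion_inter, h.iUnion_image]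
    ext y
    simp only [mem_inter_iff, Set.mem_sdiff, mem_ball', mem_singleton_iff, mem_preimage, mem_Ioo,
      dist_pos, ne_comm (a := x)]
    exact ⟨fun hy => ⟨hy.2.2, hy.1.2⟩, fun hy => ⟨⟨hy.1.trans_le hδε, hy.2⟩, hy.2, hy.1⟩⟩

theorem image_Ioo_subset (h : IsStar x ε γ) (i : ι) : γ i '' Ioo 0 ε ⊆ ball x ε \ {x} :=
  h.iUnion_image ▸ subset_iUnion (fun i => γ i '' Ioo 0 ε) i

theorem exists_apply_eq (h : IsStar x ε γ) {y : X} (hy : y ∈ ball x ε \ {x}) :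
    ∃ i, ∃ t ∈ Ioo 0 ε, γ i t = y :=
  mem_iUnion.1 (h.iUnion_image ▸ hy)

theorem isPreconnected_inter_ball (h : IsStar x ε γ) {U : Set X} (hx : x ∈ U)
    (hU : ∀ i, γ i '' Ioo 0 ε ⊆ U ∨ Disjoint (γ i '' Ioo 0 ε) U) :
    IsPreconnected (U ∩ ball x ε) := by
  refine isPreconnected_of_forall x fun y ⟨hyU, hyε⟩ => ?_
  by_cases hyx : y = x
  · exact ⟨{x}, singleton_subset_iff.2 ⟨hx, mem_ball_self h.pos⟩, rfl, hyx,
      isPreconnected_singleton⟩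
  obtain ⟨i, t, ht, rfl⟩ := h.exists_apply_eq ⟨hyε, hyx⟩
  have hiU : γ i '' Ioo 0 ε ⊆ U := (hU i).resolve_right fun hdisj =>
    disjoint_left.1 hdisj (mem_image_of_mem _ ht) hyU
  refine ⟨γ i '' Ico 0 ε, ?_, ⟨0, ⟨le_rfl, h.pos⟩, (h.isArm i).apply_zero⟩,
    mem_image_of_mem _ (Ioo_subset_Ico_self ht),
    isPreconnected_Ico.image _ (h.isArm i).continuousOn⟩
  rw [← Ioo_insert_left h.pos, image_insert_eq, (h.isArm i).apply_zero]
  exact insert_subset ⟨hx, mem_ball_self h.pos⟩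
    (subset_inter hiU ((h.image_Ioo_subset i).trans sdiff_subset))

theorem eventually_isPreconnected_inter_ball [Finite ι] (h : IsStar x ε γ) {U : Set X}
    (hU : IsPreconnected U) (hx : x ∈ U) : ∀ᶠ δ in 𝓝[>] 0, IsPreconnected (U ∩ ball x δ) := by
  have harms := eventually_all.2 fun i =>
    (h.isArm i).eventually_image_Ioo_subset_or_disjoint hU hx h.pos
  filter_upwards [harms, Ioo_mem_nhdsGT h.pos] with δ hδ hδε
  exact (h.mono hδε.1 hδε.2.le).isPreconnected_inter_ball hx hδ

end IsStar

theorem IsMetricGraph.locallyConnectedSpace (hgraph : IsMetricGraph X) {U : Set X}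
    (hU : IsPreconnected U) : LocallyConnectedSpace U := by
  refine locallyConnectedSpace_iff_connected_subsets.2 fun p N hN => ?_
  obtain ⟨r, hr, hrN⟩ := Metric.mem_nhds_iff.1 hN
  obtain ⟨ε, hfin, γ, hstar⟩ := hgraph.exists_isStar p.1
  have := hfin.to_subtype
  obtain ⟨δ, hδ, hδr⟩ := ((hstar.eventually_isPreconnected_inter_ball hU p.2).and
    (Ioo_mem_nhdsGT hr)).exists
  refine ⟨ball p δ, ball_mem_nhds p hδr.1, ?_, (ball_subset_ball hδr.2.le).trans hrN⟩
  rw [← IsInducing.subtypeVal.isPreconnected_image]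
  rwa [← Subtype.image_preimage_coe] at hδ

namespace IsStar

variable {ι : Type*} {x : X} {ε δ l : ℝ} {γ : ι → ℝ → X}

theorem enatCard_connectedComponents_le (h : IsStar x ε γ) (hgraph : IsMetricGraph X) {U : Set X}
    (hU : IsPreconnected U) (hball : ball x ε ⊆ U) :
    ENat.card (ConnectedComponents ↥(U \ {x})) ≤ ENat.card ι := by
  have := hgraph.locallyConnectedSpace hU
  have harm : ∀ i, γ i '' Ioo 0 ε ⊆ U \ {x} := fun i =>
    (h.image_Ioo_subset i).trans (sdiff_subset_sdiff_left hball)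
  have hmid : ε / 2 ∈ Ioo 0 ε := ⟨half_pos h.pos, half_lt_self h.pos⟩
  refine enatCard_connectedComponents_le_of_forall_exists_mem (a := fun i => γ i (ε / 2))
    (fun i => harm i (mem_image_of_mem _ hmid)) fun q hq => ?_
  obtain ⟨p, hp, hpε⟩ := Metric.mem_closure_iff.1
    (mem_closure_connectedComponentIn_diff_singleton hU (hball (mem_ball_self h.pos)) hq) ε h.pos
  obtain ⟨i, t, ht, rfl⟩ :=
    h.exists_apply_eq ⟨mem_ball'.2 hpε, (connectedComponentIn_subset _ _ hp).2⟩
  have hpre : IsPreconnected (γ i '' Ioo 0 ε) :=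
    isPreconnected_Ioo.image _ ((h.isArm i).continuousOn.mono Ioo_subset_Ico_self)
  rw [connectedComponentIn_eq hp]
  exact ⟨i, hpre.subset_connectedComponentIn (mem_image_of_mem _ ht) (harm i)
    (mem_image_of_mem _ hmid)⟩

theorem degree_le (h : IsStar x ε γ) (hgraph : IsMetricGraph X) : degree x ≤ ENat.card ι := by
  refine iSup_le fun ⟨U, hUx, hU⟩ => ?_
  obtain ⟨r, hr, hball⟩ := Metric.mem_nhds_iff.1 hUx
  exact (h.mono (lt_min hr h.pos) (min_le_right r ε)).enatCard_connectedComponents_le hgraph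
    hU.isPreconnected ((ball_subset_ball (min_le_left r ε)).trans hball)

theorem dist_apply_of_ne (h : IsStar x ε γ) (hlen : IsLengthSpace X) {i j : ι} (hij : i ≠ j)
    {s t : ℝ} (hs : 0 < s) (ht : 0 < t) (hst : 2 * s + t < ε) :
    dist (γ i s) (γ j t) = s + t := by
  have hsε : s ∈ Ioo 0 ε := ⟨hs, by linarith⟩
  have htε : t ∈ Ioo 0 ε := ⟨ht, by linarith⟩
  have hxs := (h.isArm i).dist_apply (Ioo_subset_Ico_self hsε)
  have hxt := (h.isArm j).dist_apply (Ioo_subset_Ico_self htε)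
  have hle : dist (γ i s) (γ j t) ≤ s + t := by
    simpa only [hxs, hxt] using dist_triangle_left (γ i s) (γ j t) x
  refine hle.antisymm ?_
  have hnotMem : γ j t ∉ γ i '' Ioo 0 ε :=
    disjoint_right.1 (h.disjoint hij) (mem_image_of_mem _ htε)
  simpa only [hxs, hxt] using (h.isArm i).dist_add_dist_le hlen (mem_image_of_mem _ hsε) hnotMem
    (by linarith)

theorem measurableSet_otherArms [MeasurableSpace X] [OpensMeasurableSpace X] (h : IsStar x ε γ)
    (i : ι) (hδ : δ ≤ ε) : MeasurableSet (otherArms γ i δ) :=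
  (isOpen_biUnion fun j _ => (h.isArm j).isOpen_image_Ioo le_rfl hδ).measurableSet

theorem hausdorffMeasure_otherArms [MeasurableSpace X] [BorelSpace X] [Countable ι]
    (h : IsStar x ε γ) (i : ι) (hδ : δ ≤ ε) :
    (μH[1] : Measure X) (otherArms γ i δ) = ({i}ᶜ : Set ι).encard * ENNReal.ofReal δ := by
  have hdisj : ({i}ᶜ : Set ι).PairwiseDisjoint fun j => γ j '' Ioo 0 δ := fun j _ j' _ hjj' =>
    (h.disjoint hjj').mono (image_mono (Ioo_subset_Ioo_right hδ))
      (image_mono (Ioo_subset_Ioo_right hδ))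
  have harm : ∀ j, (μH[1] : Measure X) (γ j '' Ioo 0 δ) = ENNReal.ofReal δ := fun j => by
    rw [(h.isArm j).hausdorffMeasure_image fun s hs => ⟨hs.1.le, hs.2.trans_le hδ⟩,
      Real.volume_Ioo, sub_zero]
  rw [otherArms, measure_biUnion (to_countable _) hdisj fun j _ =>
    ((h.isArm j).isOpen_image_Ioo le_rfl hδ).measurableSet]
  simp only [harm, ENNReal.tsum_set_const]

theorem otherArms_subset_ann (h : IsStar x ε γ) (hlen : IsLengthSpace X) (i : ι) (hl : 0 < l)
    (hlδ : 2 * l + δ ≤ ε) : otherArms γ i δ ⊆ ann (γ i l) l (l + δ) := by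
  intro z hz
  obtain ⟨j, hji, t, ht, rfl⟩ := mem_iUnion₂.1 hz
  have hdist := h.dist_apply_of_ne hlen (Ne.symm hji) hl ht.1 (by linarith [ht.2])
  refine ⟨mem_ball'.2 (by linarith [ht.2]), fun hcl => ?_⟩
  have := mem_closedBall'.1 (closure_ball_subset_closedBall hcl)
  linarith [ht.1]

theorem geodSlice_otherArms_subset (h : IsStar x ε γ) (hlen : IsLengthSpace X) (i : ι)
    (hl : 0 < l) (hlδ : 4 * l + δ ≤ ε) :
    geodSlice (γ i l) (l - δ) l (otherArms γ i δ) ⊆ γ i '' Ioc 0 δ := by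
  rintro y ⟨⟨hyl, hyδ⟩, z, hz, hgeod⟩
  obtain ⟨j, hji, t, ht, rfl⟩ := mem_iUnion₂.1 hz
  rw [mem_ball'] at hyl
  have hle : l - δ ≤ dist (γ i l) y := by
    by_contra! hlt
    exact hyδ (subset_closure (mem_ball'.2 hlt))
  have hlε : l ∈ Ioo 0 ε := ⟨hl, by linarith [ht.1, ht.2]⟩
  have hxl := (h.isArm i).dist_apply (Ioo_subset_Ico_self hlε)
  have hy : y ∈ γ i '' Ioo 0 ε := by
    by_contra hy
    have := (h.isArm i).dist_add_dist_le hlen (mem_image_of_mem _ hlε) hy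
      (by linarith [ht.1, ht.2])
    linarith [dist_nonneg (x := x) (y := y)]
  obtain ⟨s, hs, rfl⟩ := hy
  have hxs := (h.isArm i).dist_apply (Ioo_subset_Ico_self hs)
  have hsl : s < 2 * l := by linarith [dist_triangle x (γ i l) (γ i s)]
  have hlt := h.dist_apply_of_ne hlen (Ne.symm hji) hl ht.1 (by linarith [ht.2])
  have hst := h.dist_apply_of_ne hlen (Ne.symm hji) hs.1 ht.1 (by linarith [ht.2])
  exact mem_image_of_mem _ ⟨hs.1, by linarith⟩

theorem encard_mul_Vkn_le [MeasurableSpace X] [BorelSpace X] [Countable ι] (h : IsStar x ε γ)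
    (hlen : IsLengthSpace X) {k n C : ℝ} (hBG : SatisfiesBG (μH[1] : Measure X) k n C) (i : ι)
    (hδ : 0 < δ) (hδl : δ < l) (hl : 5 * l ≤ ε) :
    ({i}ᶜ : Set ι).encard * ENNReal.ofReal (Vkn k n (l - δ) l) ≤
      ENNReal.ofReal C * ENNReal.ofReal (Vkn k n l (l + δ)) := by
  have hl0 : 0 < l := hδ.trans hδl
  have hslice : (μH[1] : Measure X) (geodSlice (γ i l) (l - δ) l (otherArms γ i δ)) ≤
      ENNReal.ofReal δ := by
    refine (measure_mono (h.geodSlice_otherArms_subset hlen i hl0 (by linarith))).trans_eq ?_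
    rw [(h.isArm i).hausdorffMeasure_image fun s hs => ⟨hs.1.le, by linarith [hs.2]⟩,
      Real.volume_Ioc, sub_zero]
  have hBGδ := hBG (γ i l) l (l + δ) (l - δ) l (by linarith) (by linarith) (by linarith)
    (by linarith) (by linarith) (otherArms γ i δ) (h.measurableSet_otherArms i (by linarith))
    (h.otherArms_subset_ann hlen i hl0 (by linarith))
  rw [h.hausdorffMeasure_otherArms i (by linarith)] at hBGδ
  refine (ENNReal.mul_le_mul_iff_right (ENNReal.ofReal_pos.2 hδ).ne' ENNReal.ofReal_ne_top).1 ?_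
  calc ENNReal.ofReal δ * (({i}ᶜ : Set ι).encard * ENNReal.ofReal (Vkn k n (l - δ) l))
      = ({i}ᶜ : Set ι).encard * ENNReal.ofReal δ * ENNReal.ofReal (Vkn k n (l - δ) l) := by ring
    _ ≤ ENNReal.ofReal C * ENNReal.ofReal δ * ENNReal.ofReal (Vkn k n l (l + δ)) :=
        hBGδ.trans (by gcongr)
    _ = ENNReal.ofReal δ * (ENNReal.ofReal C * ENNReal.ofReal (Vkn k n l (l + δ))) := by ring

theorem enatCard_le [MeasurableSpace X] [BorelSpace X] [Countable ι] (h : IsStar x ε γ)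
    (hlen : IsLengthSpace X) {k n C : ℝ} (hn : 0 < n)
    (hBG : SatisfiesBG (μH[1] : Measure X) k n C) :
    (ENat.card ι : ℝ≥0∞) ≤ ENNReal.ofReal C + 1 := by
  rcases isEmpty_or_nonempty ι with hι | ⟨⟨i⟩⟩
  · simp [ENat.card_eq_zero_iff_empty ι |>.2 hι]
  obtain ⟨l, hgenSin, hl, hlε⟩ := ((eventually_genSin_pos k).and
    (Ioo_mem_nhdsGT (div_pos h.pos (by norm_num : (0 : ℝ) < 5)))).exists
  have hothers : (({i}ᶜ : Set ι).encard : ℝ≥0∞) ≤ ENNReal.ofReal C := by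
    refine le_of_eventually_mul_Vkn_le hn hgenSin ?_
    filter_upwards [Ioo_mem_nhdsGT hl] with δ hδ
    exact h.encard_mul_Vkn_le hlen hBG i hδ.1 hδ.2 (by linarith)
  have hcard : ENat.card ι = ({i}ᶜ : Set ι).encard + 1 := by
    rw [← encard_univ, ← encard_add_encard_compl {i}, encard_singleton, add_comm]
  rw [hcard, ENat.toENNReal_add, ENat.toENNReal_one]
  gcongr

end IsStar

theorem degree_le_of_metricGraph_general {X : Type*} [MetricSpace X] [MeasurableSpace X]
    [BorelSpace X] (hgraph : IsMetricGraph X) (hlen : IsLengthSpace X) (k n C : ℝ) (hn : 0 < n)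
    (hC : 0 ≤ C) (hBG : SatisfiesBG (μH[1] : Measure X) k n C) (x : X) :
    (degree x : ℝ≥0∞) ≤ ENNReal.ofReal (C + 1) := by
  obtain ⟨ε, hfin, γ, hstar⟩ := hgraph.exists_isStar x
  have := hfin.to_subtype
  calc (degree x : ℝ≥0∞) ≤ ENat.card (branches x ε) :=
        ENat.toENNReal_le.2 (hstar.degree_le hgraph)
    _ ≤ ENNReal.ofReal C + 1 := hstar.enatCard_le hlen hn hBG
    _ = ENNReal.ofReal (C + 1) := by rw [ENNReal.ofReal_add hC zero_le_one, ENNReal.ofReal_one]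

/-- In a metric graph whose 1-dimensional Hausdorff measure satisfies BG(k,n) with
constant C, every local cut point has degree at most `C + 1`. -/
theorem degree_le_of_metricGraph {X : Type*} [MetricSpace X] [MeasurableSpace X]
    [BorelSpace X] [CompleteSpace X] [LocallyCompactSpace X]
    (hgraph : IsMetricGraph X) (hlen : IsLengthSpace X) (k n C : ℝ) (hn : 1 ≤ n)
    (hC : 1 ≤ C) (hBG : SatisfiesBG (μH[1] : Measure X) k n C)
    (x : X) (hx : IsLocalCutPoint x) :
    (degree x : ℝ≥0∞) ≤ ENNReal.ofReal (C + 1) :=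
  degree_le_of_metricGraph_general hgraph hlen k n C (zero_lt_one.trans_le hn)
    (zero_le_one.trans hC) hBG x
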